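/- arXiv:1506.04656 — 8 statements merged into one kernel-verified Lean document; each statement's English description precedes it below -/
import Mathlib

section
/- Let m ≥ 2, n ≥ 1, and A : ℕᵐ → Mat_n(ℝ). Define S = { y : ℕᵐ → ℝⁿ : y(t + 𝟏) = y(t) for all t ∈ ℕᵐ } and V = { x : ℕᵐ → ℝⁿ : x(t + 𝟏) = A(t)x(t) for all t ∈ ℕᵐ }, and define ψ : S → V by ψ(y)(t) = ( ∏_{k=1}^{μ(t)} A(t − k·𝟏) ) · y(t − μ(t)·𝟏) if μ(t) ≥ 1, and ψ(y)(t) = y(t) if μ(t) = 0, where the product is taken with indices k increasing from left to right. Then S and V are real vector subspaces of the space of functions ℕᵐ → ℝⁿ, ψ is well defined (its values lie in V), and ψ is an isomorphism of real vector spaces. -/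
/-- Proposition 2(a) of the paper.  `S` (diagonally periodic sequences) and `V`
(solutions of `x(t+𝟏) = A(t)x(t)`) are real vector subspaces of the space of
functions `ℕᵐ → ℝⁿ`, and the map `ψ` given by the ordered matrix product
formula is a well-defined linear isomorphism `S ≃ V`.  Here
`μ(t)` is the minimum of the components of `t`. -/
theorem stmt_8 (m n : ℕ) (hm : 2 ≤ m) (hn : 1 ≤ n)
    (A : (Fin m → ℕ) → Matrix (Fin n) (Fin n) ℝ)
    (μ : (Fin m → ℕ) → ℕ)
    (hμ : ∀ t : Fin m → ℕ,
      μ t = Finset.univ.inf' ⟨⟨0, by omega⟩, Finset.mem_univ _⟩ t) :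
    ∃ S V : Submodule ℝ ((Fin m → ℕ) → Fin n → ℝ),
      (S : Set ((Fin m → ℕ) → Fin n → ℝ)) =
        {y | ∀ t : Fin m → ℕ, y (fun i => t i + 1) = y t} ∧
      (V : Set ((Fin m → ℕ) → Fin n → ℝ)) =
        {x | ∀ t : Fin m → ℕ, x (fun i => t i + 1) = (A t).mulVec (x t)} ∧
      ∃ ψ : S ≃ₗ[ℝ] V,
        ∀ (y : S) (t : Fin m → ℕ),
          (ψ y : (Fin m → ℕ) → Fin n → ℝ) t =
            if 1 ≤ μ t then
              (((List.range (μ t)).map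
                  (fun k => A (fun i => t i - (k + 1)))).prod).mulVec
                ((y : (Fin m → ℕ) → Fin n → ℝ) (fun i => t i - μ t))
            else (y : (Fin m → ℕ) → Fin n → ℝ) t := by
  have hle : ∀ t i, μ t ≤ t i := fun t i => by
    rw [hμ]; exact Finset.inf'_le _ (Finset.mem_univ i)
  have hex : ∀ t, ∃ i, μ t = t i := fun t => by
    obtain ⟨i, _, hi⟩ := Finset.exists_mem_eq_inf' (s := (Finset.univ : Finset (Fin m)))
      ⟨⟨0, by omega⟩, Finset.mem_univ _⟩ t
    exact ⟨i, by rw [hμ, hi]⟩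
  have hsucc : ∀ t : Fin m → ℕ, μ (fun i => t i + 1) = μ t + 1 := fun t => by
    obtain ⟨i, hi⟩ := hex t
    obtain ⟨j, hj⟩ := hex (fun i => t i + 1)
    have h1 := hle (fun i => t i + 1) i
    have h2 := hle t j
    omega
  have hzero : ∀ t : Fin m → ℕ, μ (fun i => t i - μ t) = 0 := fun t => by
    obtain ⟨i, hi⟩ := hex t
    have h1 := hle (fun i => t i - μ t) i
    omega
  have hind : ∀ p : (Fin m → ℕ) → Prop, (∀ t, μ t = 0 → p t) →
      (∀ t, p t → p (fun i => t i + 1)) → ∀ t, p t := by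
    intro p h0 h1
    have key : ∀ k, ∀ t, μ t = k → p t := by
      intro k
      induction k with
      | zero => exact h0
      | succ k ih =>
        intro t ht
        have e : t = fun i => (fun j => t j - 1) i + 1 := by
          funext i
          have := hle t i
          simp only
          omega
        have h2 := hsucc (fun j => t j - 1)
        rw [← e] at h2
        rw [e]
        exact h1 _ (ih _ (by omega))
    exact fun t => key _ t rfl
  let P : (Fin m → ℕ) → Matrix (Fin n) (Fin n) ℝ := fun t =>
    ((List.range (μ t)).map (fun k => A (fun i => t i - (k + 1)))).prod
  have hP0 : ∀ t, μ t = 0 → P t = 1 := fun t ht => by simp [P, ht]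
  have hP1 : ∀ t : Fin m → ℕ, P (fun i => t i + 1) = A t * P t := fun t => by
    simp only [P, hsucc, List.range_succ_eq_map, List.map_cons, List.prod_cons, List.map_map]
    congr 3
    funext k
    simp only [Function.comp]
    congr 1
    funext i
    omega
  have hsub : ∀ t : Fin m → ℕ,
      (fun i => (fun j => t j + 1) i - μ (fun j => t j + 1)) = fun i => t i - μ t := fun t => by
    funext i
    simp only [hsucc]
    omega
  have hsub0 : ∀ t : Fin m → ℕ, μ t = 0 → (fun i => t i - μ t) = t := fun t ht => by
    funext i
    simp [ht]
  let S : Submodule ℝ ((Fin m → ℕ) → Fin n → ℝ) :=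
    { carrier := {y | ∀ t : Fin m → ℕ, y (fun i => t i + 1) = y t}
      add_mem' := fun {a b} ha hb t => by simp only [Pi.add_apply, ha t, hb t]
      zero_mem' := fun t => rfl
      smul_mem' := fun c a ha t => by simp only [Pi.smul_apply, ha t] }
  let V : Submodule ℝ ((Fin m → ℕ) → Fin n → ℝ) :=
    { carrier := {x | ∀ t : Fin m → ℕ, x (fun i => t i + 1) = (A t).mulVec (x t)}
      add_mem' := fun {a b} ha hb t => by
        simp only [Pi.add_apply, ha t, hb t, Matrix.mulVec_add]
      zero_mem' := fun t => by simp
      smul_mem' := fun c a ha t => by simp only [Pi.smul_apply, ha t, Matrix.mulVec_smul] }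
  have hS : ∀ y ∈ S, ∀ t : Fin m → ℕ, y (fun i => t i - μ t) = y t := by
    intro y hy
    apply hind
    · intro t ht
      rw [hsub0 t ht]
    · intro t ht
      rw [hsub t, ht]
      exact (hy t).symm
  have hV : ∀ x ∈ V, ∀ t : Fin m → ℕ, (P t).mulVec (x (fun i => t i - μ t)) = x t := by
    intro x hx
    apply hind
    · intro t ht
      rw [hsub0 t ht, hP0 t ht, Matrix.one_mulVec]
    · intro t ht
      rw [hsub t, hP1, ← Matrix.mulVec_mulVec, ht]
      exact (hx t).symm
  let ψ : S ≃ₗ[ℝ] V :=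
    { toFun := fun y => ⟨fun t => (P t).mulVec (y.1 (fun i => t i - μ t)), fun t => by
        change (P (fun i => t i + 1)).mulVec
          (y.1 (fun i => (fun j => t j + 1) i - μ (fun j => t j + 1))) =
            (A t).mulVec ((P t).mulVec (y.1 (fun i => t i - μ t)))
        rw [hsub t, hP1, ← Matrix.mulVec_mulVec]⟩
      map_add' := fun a b => by
        apply Subtype.ext
        funext t
        exact Matrix.mulVec_add (P t) (a.1 (fun i => t i - μ t)) (b.1 (fun i => t i - μ t))
      map_smul' := fun c a => by
        apply Subtype.ext
        funext t
        exact Matrix.mulVec_smul (P t) c (a.1 (fun i => t i - μ t))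
      invFun := fun x => ⟨fun t => x.1 (fun i => t i - μ t), fun t => by
        exact congrArg x.1 (hsub t)⟩
      left_inv := fun y => by
        apply Subtype.ext
        funext t
        simp only
        rw [hP0 _ (hzero t), Matrix.one_mulVec, hsub0 _ (hzero t)]
        exact hS y.1 y.2 t
      right_inv := fun x => by
        apply Subtype.ext
        funext t
        simp only
        rw [hsub0 _ (hzero t)]
        exact hV x.1 x.2 t }
  refine ⟨S, V, rfl, rfl, ψ, fun y t => ?_⟩
  change (P t).mulVec (y.1 (fun i => t i - μ t)) = _
  split_ifs with h
  · rfl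
  · have h0 : μ t = 0 := by omega
    rw [hsub0 t h0, hP0 t h0, Matrix.one_mulVec]
end

section
/- Let m ≥ 2, n ≥ 1, and A : ℕᵐ → Mat_n(ℝ). Then the real vector space V = { x : ℕᵐ → ℝⁿ : x(t + 𝟏) = A(t)x(t) for all t ∈ ℕᵐ } is infinite dimensional. -/
open Classical in
/-- Auxiliary recursion building a solution with boundary data `b`. -/
noncomputable def auxSol {m n : ℕ} (A : (Fin m → ℕ) → Matrix (Fin n) (Fin n) ℝ)
    (b : (Fin m → ℕ) → Fin n → ℝ) : ℕ → (Fin m → ℕ) → Fin n → ℝ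
  | 0, t => b t
  | k + 1, t => if ∃ i, t i = 0 then b t else
      (A (fun i => t i - 1)).mulVec (auxSol A b k (fun i => t i - 1))

theorem auxSol_bdry {m n : ℕ} (A : (Fin m → ℕ) → Matrix (Fin n) (Fin n) ℝ)
    (b : (Fin m → ℕ) → Fin n → ℝ) (k : ℕ) (t : Fin m → ℕ) (h : ∃ i, t i = 0) :
    auxSol A b k t = b t := by
  cases k with
  | zero => rfl
  | succ k => rw [auxSol, if_pos h]

theorem auxSol_step {m n : ℕ} (A : (Fin m → ℕ) → Matrix (Fin n) (Fin n) ℝ)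
    (b : (Fin m → ℕ) → Fin n → ℝ) (k : ℕ) (t : Fin m → ℕ) :
    auxSol A b (k + 1) (fun i => t i + 1) = (A t).mulVec (auxSol A b k t) := by
  rw [auxSol, if_neg (by simp)]
  simp

/-- Proposition 2(b) of the paper: the space `V` of solutions of
`x(t+𝟏) = A(t)x(t)` is an infinite dimensional real vector space. -/
theorem stmt_9 (m n : ℕ) (hm : 2 ≤ m) (hn : 1 ≤ n)
    (A : (Fin m → ℕ) → Matrix (Fin n) (Fin n) ℝ) :
    ∃ V : Submodule ℝ ((Fin m → ℕ) → Fin n → ℝ),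
      (V : Set ((Fin m → ℕ) → Fin n → ℝ)) =
        {x | ∀ t : Fin m → ℕ, x (fun i => t i + 1) = (A t).mulVec (x t)} ∧
      ¬ Module.Finite ℝ V := by
  let V : Submodule ℝ ((Fin m → ℕ) → Fin n → ℝ) :=
    { carrier := {x | ∀ t : Fin m → ℕ, x (fun i => t i + 1) = (A t).mulVec (x t)}
      add_mem' := by
        intro x y hx hy t
        simp only [Pi.add_apply, Matrix.mulVec_add, hx t, hy t]
      zero_mem' := by
        intro t
        simp
      smul_mem' := by
        intro c x hx t
        simp only [Pi.smul_apply, Matrix.mulVec_smul, hx t] }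
  refine ⟨V, rfl, fun hfin => ?_⟩
  let i0 : Fin m := ⟨0, by omega⟩
  let i1 : Fin m := ⟨1, by omega⟩
  have hne : i0 ≠ i1 := by simp [i0, i1]
  let j0 : Fin n := ⟨0, hn⟩
  let N := Module.finrank ℝ V + 1
  let L : V →ₗ[ℝ] (Fin N → ℝ) :=
    { toFun := fun x k => (x : (Fin m → ℕ) → Fin n → ℝ) (Function.update 0 i1 (k : ℕ)) j0
      map_add' := fun x y => rfl
      map_smul' := fun c x => rfl }
  have hL : Function.Surjective L := by
    intro f
    let b : (Fin m → ℕ) → Fin n → ℝ := fun t _ => if h : t i1 < N then f ⟨t i1, h⟩ else 0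
    refine ⟨⟨fun t => auxSol A b (t i0) t, fun t => auxSol_step A b (t i0) t⟩, ?_⟩
    funext k
    change auxSol A b _ (Function.update 0 i1 (k : ℕ)) j0 = f k
    rw [auxSol_bdry A b _ _ ⟨i0, by simp [Function.update_of_ne hne]⟩]
    simp [b]
  have h := LinearMap.finrank_le_finrank_of_surjective hL
  simp [N] at h
end

section
/- Let m ≥ 2, n ≥ 1, and let v ∈ ℝⁿ with v ≠ 0. For each k ∈ ℕ* define y_k : ℕᵐ → ℝⁿ by y_k(t) = ((t¹ : ℤ) − (t² : ℤ))^k · v. Then each y_k satisfies y_k(t + 𝟏) = y_k(t) for all t ∈ ℕᵐ, and the family { y_k : k ∈ ℕ* } is linearly independent over ℝ in the space of functions ℕᵐ → ℝⁿ. -/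
/-- The family `y_k(t) = ((t¹ : ℤ) − (t² : ℤ))^k • v`, `k ∈ ℕ*`, consists of
diagonally periodic sequences and is linearly independent over `ℝ`. -/
theorem stmt_10 (m n : ℕ) (hm : 2 ≤ m) (hn : 1 ≤ n)
    (v : Fin n → ℝ) (hv : v ≠ 0)
    (y : {k : ℕ // 0 < k} → (Fin m → ℕ) → Fin n → ℝ)
    (hy : ∀ (k : {k : ℕ // 0 < k}) (t : Fin m → ℕ),
      y k t = (((((t ⟨0, by omega⟩ : ℕ) : ℤ) - ((t ⟨1, by omega⟩ : ℕ) : ℤ))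
                  ^ (k : ℕ) : ℤ) : ℝ) • v) :
    (∀ (k : {k : ℕ // 0 < k}) (t : Fin m → ℕ), y k (fun i => t i + 1) = y k t) ∧
    LinearIndependent ℝ y := by
  constructor
  · intro k t
    rw [hy, hy]
    push_cast
    rw [add_sub_add_right_eq_sub]
  · rw [linearIndependent_iff']
    intro s g hg i hi
    obtain ⟨j, hj⟩ := Function.ne_iff.mp hv
    have hj' : v j ≠ 0 := hj
    let p : Polynomial ℝ := ∑ k ∈ s, Polynomial.monomial (k : ℕ) (g k)
    have hev : ∀ a : ℕ, p.eval (a : ℝ) = 0 := by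
      intro a
      have h := congrFun (congrFun hg (fun l => if (l : ℕ) = 0 then a else 0)) j
      simp only [Finset.sum_apply, Pi.smul_apply, hy, smul_eq_mul, Pi.zero_apply] at h
      simp only [p, Polynomial.eval_finset_sum, Polynomial.eval_monomial]
      have h2 : (∑ k ∈ s, g k * (a : ℝ) ^ (k : ℕ)) * v j = 0 := by
        rw [Finset.sum_mul, ← h]
        refine Finset.sum_congr rfl fun k _ => ?_
        simp [mul_assoc]
      exact (mul_eq_zero.mp h2).resolve_right hj'
    have hp : p = 0 := by
      refine Polynomial.eq_zero_of_infinite_isRoot p ?_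
      refine (Set.infinite_range_of_injective (Nat.cast_injective (R := ℝ))).mono ?_
      rintro _ ⟨a, rfl⟩
      exact hev a
    have hc : p.coeff (i : ℕ) = g i := by
      simp only [p, Polynomial.finset_sum_coeff, Polynomial.coeff_monomial]
      rw [Finset.sum_eq_single i]
      · simp
      · intro b _ hb
        rw [if_neg (fun h => hb (Subtype.ext h))]
      · intro h
        exact absurd hi h
    rw [← hc, hp, Polynomial.coeff_zero]
end

section
/- Let m ≥ 2 and a, b ∈ ℝ, and suppose the polynomial λ² + aλ + b has two distinct real roots λ₁ ≠ λ₂. Let f₁,…,f_m, g₁,…,g_m : ℕ^{m-1} → ℝ satisfy, for all α, β ∈ {1,…,m}, the compatibility conditions: f_α|_{t^β=0} = f_β|_{t^α=0}, g_α|_{t^β=1} = g_β|_{t^α=1}, and f_α|_{t^β=1} = g_β|_{t^α=0}, for all values of the remaining variables. Then the unique function x : ℕᵐ → ℝ satisfying x(t + 2·𝟏) + a·x(t + 𝟏) + b·x(t) = 0 for all t ∈ ℕᵐ, x(t)|_{t^γ=0} = f_γ and x(t)|_{t^γ=1} = g_γ for all γ ∈ {1,…,m}, is given, whenever μ(t)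 = t^β, by x(t) = ((λ₁^{t^β} − λ₂^{t^β})/(λ₁ − λ₂)) · g_β(t¹−t^β+1,…,t̂^β,…,tᵐ−t^β+1) − ((λ₂λ₁^{t^β} − λ₁λ₂^{t^β})/(λ₁ − λ₂)) · f_β(t¹−t^β,…,t̂^β,…,tᵐ−t^β). -/
/-- Theorem 2(i) of the paper: second order diagonal recurrence
`x(t+2·𝟏) + a x(t+𝟏) + b x(t) = 0` whose characteristic polynomial
`λ² + aλ + b` has distinct real roots `λ₁ ≠ λ₂`.  Boundary data `f γ, g γ` are
functions on `ℕ^{m-1}`, encoded as functions on `{i : Fin m // i ≠ γ} → ℕ`;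
`μ(t) = t^β` is encoded as `∀ i, t β ≤ t i`. -/
theorem stmt_14 (m : ℕ) (hm : 2 ≤ m) (a b l1 l2 : ℝ) (hne : l1 ≠ l2)
    (ha : a = -(l1 + l2)) (hb : b = l1 * l2)
    (f g : (γ : Fin m) → ({i : Fin m // i ≠ γ} → ℕ) → ℝ)
    (hff : ∀ α β : Fin m, ∀ t : Fin m → ℕ, t α = 0 → t β = 0 →
        f α (fun i => t i.1) = f β (fun i => t i.1))
    (hgg : ∀ α β : Fin m, ∀ t : Fin m → ℕ, t α = 1 → t β = 1 →
        g α (fun i => t i.1) = g β (fun i => t i.1))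
    (hfg : ∀ α β : Fin m, ∀ t : Fin m → ℕ, t α = 0 → t β = 1 →
        f α (fun i => t i.1) = g β (fun i => t i.1)) :
    (∃! x : (Fin m → ℕ) → ℝ,
        (∀ t : Fin m → ℕ,
            x (fun i => t i + 2) + a * x (fun i => t i + 1) + b * x t = 0) ∧
        (∀ γ : Fin m, ∀ t : Fin m → ℕ, t γ = 0 → x t = f γ (fun i => t i.1)) ∧
        (∀ γ : Fin m, ∀ t : Fin m → ℕ, t γ = 1 → x t = g γ (fun i => t i.1))) ∧
    (∀ x : (Fin m → ℕ) → ℝ,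
        (∀ t : Fin m → ℕ,
            x (fun i => t i + 2) + a * x (fun i => t i + 1) + b * x t = 0) →
        (∀ γ : Fin m, ∀ t : Fin m → ℕ, t γ = 0 → x t = f γ (fun i => t i.1)) →
        (∀ γ : Fin m, ∀ t : Fin m → ℕ, t γ = 1 → x t = g γ (fun i => t i.1)) →
        ∀ β : Fin m, ∀ t : Fin m → ℕ, (∀ i, t β ≤ t i) →
          x t = ((l1 ^ (t β) - l2 ^ (t β)) / (l1 - l2)) *
                  g β (fun i => t i.1 - t β + 1)
              - ((l2 * l1 ^ (t β) - l1 * l2 ^ (t β)) / (l1 - l2)) *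
                  f β (fun i => t i.1 - t β)) := by
  have hd : l1 - l2 ≠ 0 := sub_ne_zero.mpr hne
  have hmin : ∀ t : Fin m → ℕ, ∃ β : Fin m, ∀ i, t β ≤ t i := by
    intro t
    have : Nonempty (Fin m) := ⟨⟨0, by omega⟩⟩
    exact Finite.exists_min t
  -- the explicit formula holds for every solution
  have key : ∀ x : (Fin m → ℕ) → ℝ,
        (∀ t : Fin m → ℕ,
            x (fun i => t i + 2) + a * x (fun i => t i + 1) + b * x t = 0) →
        (∀ γ : Fin m, ∀ t : Fin m → ℕ, t γ = 0 → x t = f γ (fun i => t i.1)) →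
        (∀ γ : Fin m, ∀ t : Fin m → ℕ, t γ = 1 → x t = g γ (fun i => t i.1)) →
        ∀ β : Fin m, ∀ t : Fin m → ℕ, (∀ i, t β ≤ t i) →
          x t = ((l1 ^ (t β) - l2 ^ (t β)) / (l1 - l2)) *
                  g β (fun i => t i.1 - t β + 1)
              - ((l2 * l1 ^ (t β) - l1 * l2 ^ (t β)) / (l1 - l2)) *
                  f β (fun i => t i.1 - t β) := by
    intro x hx h0 h1 β t ht
    have step : ∀ s : Fin m → ℕ, s β = 0 → ∀ n : ℕ,
        (x (fun i => s i + n) = ((l1 ^ n - l2 ^ n) / (l1 - l2)) *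
                  g β (fun i => s i.1 + 1)
              - ((l2 * l1 ^ n - l1 * l2 ^ n) / (l1 - l2)) *
                  f β (fun i => s i.1)) ∧
        (x (fun i => s i + (n + 1)) = ((l1 ^ (n + 1) - l2 ^ (n + 1)) / (l1 - l2)) *
                  g β (fun i => s i.1 + 1)
              - ((l2 * l1 ^ (n + 1) - l1 * l2 ^ (n + 1)) / (l1 - l2)) *
                  f β (fun i => s i.1)) := by
      intro s hs n
      induction n with
      | zero =>
        have e0 := h0 β s hs
        have e1 := h1 β (fun i => s i + 1) (by simp [hs])
        constructor
        · simp only [Nat.add_zero]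
          rw [e0]
          field_simp
          ring
        · simp only [Nat.zero_add]
          rw [e1]
          field_simp
          ring
      | succ n ih =>
        refine ⟨ih.2, ?_⟩
        have hr := hx (fun i => s i + n)
        have e2 : x (fun i => s i + (n + 1 + 1)) =
            (l1 + l2) * x (fun i => s i + (n + 1)) - l1 * l2 * x (fun i => s i + n) := by
          rw [ha, hb] at hr
          simp only [add_assoc] at hr ⊢
          norm_num at hr ⊢
          linarith
        rw [e2, ih.1, ih.2]
        field_simp
        ring
    have h := (step (fun i => t i - t β) (by simp) (t β)).1
    have e : (fun i => t i - t β + t β) = t := by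
      funext i
      exact Nat.sub_add_cancel (ht i)
    simp only [e] at h
    exact h
  refine ⟨?_, key⟩
  choose B hB using hmin
  let F : Fin m → (Fin m → ℕ) → ℝ := fun β t =>
    ((l1 ^ (t β) - l2 ^ (t β)) / (l1 - l2)) * g β (fun i => t i.1 - t β + 1)
      - ((l2 * l1 ^ (t β) - l1 * l2 ^ (t β)) / (l1 - l2)) * f β (fun i => t i.1 - t β)
  have hF : ∀ β γ : Fin m, ∀ t : Fin m → ℕ, (∀ i, t β ≤ t i) → (∀ i, t γ ≤ t i) →
      F β t = F γ t := by
    intro β γ t h1 h2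
    have e : t β = t γ := le_antisymm (h1 γ) (h2 β)
    have ef := hff β γ (fun i => t i - t γ) (by simp [e]) (by simp)
    have eg := hgg β γ (fun i => t i - t γ + 1) (by simp [e]) (by simp)
    simp only [F, e]
    rw [ef, eg]
  have hF0 : ∀ γ : Fin m, ∀ t : Fin m → ℕ, t γ = 0 → F (B t) t = f γ (fun i => t i.1) := by
    intro γ t h
    rw [hF (B t) γ t (hB t) (by simp [h])]
    simp only [F, h, Nat.sub_zero]
    field_simp
    ring
  refine ⟨fun t => F (B t) t, ⟨?_, hF0, ?_⟩, ?_⟩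
  · intro t
    have hm := hB t
    have e1 := hF (B (fun i => t i + 1)) (B t) (fun i => t i + 1) (hB (fun i => t i + 1))
      (fun i => Nat.add_le_add_right (hm i) 1)
    have e2 := hF (B (fun i => t i + 2)) (B t) (fun i => t i + 2) (hB (fun i => t i + 2))
      (fun i => Nat.add_le_add_right (hm i) 2)
    show F (B (fun i => t i + 2)) (fun i => t i + 2) +
      a * F (B (fun i => t i + 1)) (fun i => t i + 1) + b * F (B t) t = 0
    rw [e1, e2, ha, hb]
    simp only [F, Nat.add_sub_add_right]
    field_simp
    ring
  · intro γ t h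
    show F (B t) t = _
    by_cases hz : ∃ β, t β = 0
    · obtain ⟨β, hβ⟩ := hz
      rw [hF0 β t hβ]
      exact hfg β γ t hβ h
    · push Not at hz
      have hp : ∀ i, 1 ≤ t i := fun i => Nat.one_le_iff_ne_zero.mpr (hz i)
      rw [hF (B t) γ t (hB t) (by simpa [h] using hp)]
      have e : ∀ i, t i - 1 + 1 = t i := fun i => Nat.sub_add_cancel (hp i)
      simp only [F, h, e]
      field_simp
      ring
  · rintro y ⟨y1, y2, y3⟩
    funext t
    exact key y y1 y2 y3 (B t) t (hB t)
end

section
/- Let m ≥ 2 and a, b ∈ ℝ, and suppose the polynomial λ² + aλ + b has a double real root λ₁ (i.e., a = −2λ₁ and b = λ₁²). Let f₁,…,f_m, g₁,…,g_m : ℕ^{m-1} → ℝ satisfy, for all α, β ∈ {1,…,m}, the compatibility conditions: f_α|_{t^β=0} = f_β|_{t^α=0}, g_α|_{t^β=1} = g_β|_{t^α=1}, and f_α|_{t^β=1} = g_β|_{t^α=0}, for all values of the remaining variables. Then the unique function x : ℕᵐ → ℝ satisfying x(t + 2·𝟏) + a·x(t + 𝟏) + b·x(t) = 0 for all t ∈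 ℕᵐ, x(t)|_{t^γ=0} = f_γ and x(t)|_{t^γ=1} = g_γ for all γ ∈ {1,…,m}, is given, whenever μ(t) = t^β ≥ 1, by x(t) = t^β λ₁^{t^β−1} · g_β(t¹−t^β+1,…,t̂^β,…,tᵐ−t^β+1) − (t^β−1) λ₁^{t^β} · f_β(t¹−t^β,…,t̂^β,…,tᵐ−t^β). -/
noncomputable def solF (m : ℕ) (l1 : ℝ)
    (f g : (γ : Fin m) → ({i : Fin m // i ≠ γ} → ℕ) → ℝ) (β : Fin m) (t : Fin m → ℕ) : ℝ :=
  (t β : ℝ) * l1 ^ (t β - 1) * g β (fun i => t i.1 - t β + 1)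
              - ((t β : ℝ) - 1) * l1 ^ (t β) * f β (fun i => t i.1 - t β)

lemma sol_diag (m : ℕ) (l1 : ℝ) (x : (Fin m → ℕ) → ℝ)
    (hx : ∀ t : Fin m → ℕ,
      x (fun i => t i + 2) + -(2 * l1) * x (fun i => t i + 1) + l1 ^ 2 * x t = 0)
    (s : Fin m → ℕ) (n : ℕ) :
    x (fun i => s i + n) = (n : ℝ) * l1 ^ (n - 1) * x (fun i => s i + 1)
      - ((n : ℝ) - 1) * l1 ^ n * x s := by
  induction n using Nat.strong_induction_on with
  | _ n ih =>
    match n, ih with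
    | 0, _ => simp
    | 1, _ => simp
    | k + 2, ih =>
      have h0 := ih k (by omega)
      have h1 := ih (k + 1) (by omega)
      have h := hx (fun i => s i + k)
      have e1 : (fun i => s i + k + 1) = (fun i => s i + (k + 1)) := rfl
      have e2 : (fun i => s i + k + 2) = (fun i => s i + (k + 2)) := rfl
      rw [e1, e2, h0, h1] at h
      rcases k with _ | k
      · simp at h ⊢
        linear_combination h
      · simp only [Nat.add_sub_cancel, show k + 1 + 2 - 1 = k + 2 from rfl] at h ⊢
        push_cast at h ⊢
        linear_combination h

lemma sol_eq (m : ℕ) (l1 : ℝ)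
    (f g : (γ : Fin m) → ({i : Fin m // i ≠ γ} → ℕ) → ℝ) (x : (Fin m → ℕ) → ℝ)
    (hx : ∀ t : Fin m → ℕ,
      x (fun i => t i + 2) + -(2 * l1) * x (fun i => t i + 1) + l1 ^ 2 * x t = 0)
    (h0 : ∀ γ : Fin m, ∀ t : Fin m → ℕ, t γ = 0 → x t = f γ (fun i => t i.1))
    (h1 : ∀ γ : Fin m, ∀ t : Fin m → ℕ, t γ = 1 → x t = g γ (fun i => t i.1))
    (β : Fin m) (t : Fin m → ℕ) (ht : ∀ i, t β ≤ t i) : x t = solF m l1 f g β t := by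
  have h := sol_diag m l1 x hx (fun i => t i - t β) (t β)
  have e : (fun i => t i - t β + t β) = t := by
    funext i
    have := ht i
    omega
  rw [e, h0 β (fun i => t i - t β) (by simp), h1 β (fun i => t i - t β + 1) (by simp)] at h
  exact h

lemma solF_rec (m : ℕ) (l1 : ℝ)
    (f g : (γ : Fin m) → ({i : Fin m // i ≠ γ} → ℕ) → ℝ) (β : Fin m) (t : Fin m → ℕ) :
    solF m l1 f g β (fun i => t i + 2) + -(2 * l1) * solF m l1 f g β (fun i => t i + 1)
      + l1 ^ 2 * solF m l1 f g β t = 0 := by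
  simp only [solF, Nat.add_sub_add_right]
  generalize g β _ = G
  generalize f β _ = F
  generalize t β = n
  rcases n with _ | k
  · simp
    ring
  · simp only [Nat.add_sub_cancel, show k + 1 + 2 - 1 = k + 2 from rfl]
    push_cast
    ring

/-- Theorem 2(ii) of the paper: second order diagonal recurrence
`x(t+2·𝟏) + a x(t+𝟏) + b x(t) = 0` whose characteristic polynomial
`λ² + aλ + b` has a double real root `λ₁`.  Boundary data `f γ, g γ` are
functions on `ℕ^{m-1}`, encoded as functions on `{i : Fin m // i ≠ γ} → ℕ`;
`μ(t) = t^β` is encoded as `∀ i, t β ≤ t i`. -/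
theorem stmt_15 (m : ℕ) (hm : 2 ≤ m) (a b l1 : ℝ)
    (ha : a = -(2 * l1)) (hb : b = l1 ^ 2)
    (f g : (γ : Fin m) → ({i : Fin m // i ≠ γ} → ℕ) → ℝ)
    (hff : ∀ α β : Fin m, ∀ t : Fin m → ℕ, t α = 0 → t β = 0 →
        f α (fun i => t i.1) = f β (fun i => t i.1))
    (hgg : ∀ α β : Fin m, ∀ t : Fin m → ℕ, t α = 1 → t β = 1 →
        g α (fun i => t i.1) = g β (fun i => t i.1))
    (hfg : ∀ α β : Fin m, ∀ t : Fin m → ℕ, t α = 0 → t β = 1 →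
        f α (fun i => t i.1) = g β (fun i => t i.1)) :
    (∃! x : (Fin m → ℕ) → ℝ,
        (∀ t : Fin m → ℕ,
            x (fun i => t i + 2) + a * x (fun i => t i + 1) + b * x t = 0) ∧
        (∀ γ : Fin m, ∀ t : Fin m → ℕ, t γ = 0 → x t = f γ (fun i => t i.1)) ∧
        (∀ γ : Fin m, ∀ t : Fin m → ℕ, t γ = 1 → x t = g γ (fun i => t i.1))) ∧
    (∀ x : (Fin m → ℕ) → ℝ,
        (∀ t : Fin m → ℕ,
            x (fun i => t i + 2) + a * x (fun i => t i + 1) + b * x t = 0) →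
        (∀ γ : Fin m, ∀ t : Fin m → ℕ, t γ = 0 → x t = f γ (fun i => t i.1)) →
        (∀ γ : Fin m, ∀ t : Fin m → ℕ, t γ = 1 → x t = g γ (fun i => t i.1)) →
        ∀ β : Fin m, ∀ t : Fin m → ℕ, (∀ i, t β ≤ t i) → 1 ≤ t β →
          x t = (t β : ℝ) * l1 ^ (t β - 1) * g β (fun i => t i.1 - t β + 1)
              - ((t β : ℝ) - 1) * l1 ^ (t β) * f β (fun i => t i.1 - t β)) := by
  subst ha hb
  have key := sol_eq m l1 f g
  have hmin : ∀ t : Fin m → ℕ, ∃ β, ∀ i, t β ≤ t i := by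
    intro t
    haveI : Nonempty (Fin m) := ⟨⟨0, by omega⟩⟩
    exact Finite.exists_min t
  have hwd : ∀ (t : Fin m → ℕ) (β γ : Fin m), (∀ i, t β ≤ t i) → (∀ i, t γ ≤ t i) →
      solF m l1 f g β t = solF m l1 f g γ t := by
    intro t β γ hβ hγ
    have e : t β = t γ := le_antisymm (hβ γ) (hγ β)
    unfold solF
    have e1 := hff β γ (fun i => t i - t γ) (by simp [e]) (by simp)
    have e2 := hgg β γ (fun i => t i - t γ + 1) (by simp [e]) (by simp)
    simp only [e]
    rw [e1, e2]
  refine ⟨?_, fun x hx h0 h1 β t ht _ => key x hx h0 h1 β t ht⟩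
  choose am ham using hmin
  refine ⟨fun t => solF m l1 f g (am t) t, ⟨?_, ?_, ?_⟩, ?_⟩
  · intro t
    have h := solF_rec m l1 f g (am t) t
    rw [hwd _ (am t) (am fun i => t i + 2) (fun i => Nat.add_le_add_right (ham t i) 2) (ham _),
      hwd _ (am t) (am fun i => t i + 1) (fun i => Nat.add_le_add_right (ham t i) 1) (ham _)] at h
    exact h
  · intro γ t h
    show solF m l1 f g (am t) t = _
    rw [hwd t (am t) γ (ham t) (by simp [h])]
    simp [solF, h]
  · intro γ t h
    show solF m l1 f g (am t) t = _
    by_cases h0 : t (am t) = 0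
    · rw [← hfg (am t) γ t h0 h]
      simp [solF, h0]
    · have hγ : ∀ i, t γ ≤ t i := fun i => by
        have := ham t i
        omega
      rw [hwd t (am t) γ (ham t) hγ]
      have e : (fun i : {i : Fin m // i ≠ γ} => t i.1 - 1 + 1) = fun i => t i.1 := by
        funext i
        have := hγ i.1
        omega
      simp [solF, h, e]
  · rintro y ⟨hy, h0, h1⟩
    funext t
    exact key y hy h0 h1 (am t) t (ham t)
end

section
/- Let m ≥ 2 and a, b ∈ ℝ, and suppose the polynomial λ² + aλ + b has non-real complex conjugate roots r(cos θ ± i sin θ), with r > 0 and θ ∈ (0, 2π)∖{π} (equivalently a = −2r cos θ, b = r², sin θ ≠ 0). Let f₁,…,f_m, g₁,…,g_m : ℕ^{m-1} → ℝ satisfy, for all α, β ∈ {1,…,m}, the compatibility conditions: f_α|_{t^β=0} = f_β|_{t^α=0}, g_α|_{t^β=1} = g_β|_{t^α=1}, and f_α|_{t^β=1} = g_β|_{t^α=0}, for all values of the remaining variables. Then the unique function x : ℕᵐ → ℝ satisfying x(t + 2·𝟏) + a·x(t + 𝟏) + b·x(t) = 0 for all t ∈ ℕᵐ, x(t)|_{t^γ=0}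 = f_γ and x(t)|_{t^γ=1} = g_γ for all γ ∈ {1,…,m}, is given, whenever μ(t) = t^β, by x(t) = (r^{t^β−1} sin(t^β θ)/sin θ) · g_β(t¹−t^β+1,…,t̂^β,…,tᵐ−t^β+1) − (r^{t^β} sin((t^β−1)θ)/sin θ) · f_β(t¹−t^β,…,t̂^β,…,tᵐ−t^β). -/
theorem aux_A_rec (r θ : ℝ) (hr : 0 < r) (hs : Real.sin θ ≠ 0) (n : ℕ) :
    r ^ (((n + 2 : ℕ) : ℤ) - 1) * Real.sin (((n + 2 : ℕ) : ℝ) * θ) / Real.sin θ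
      + -(2 * r * Real.cos θ) *
        (r ^ (((n + 1 : ℕ) : ℤ) - 1) * Real.sin (((n + 1 : ℕ) : ℝ) * θ) / Real.sin θ)
      + r ^ 2 * (r ^ ((n : ℤ) - 1) * Real.sin ((n : ℝ) * θ) / Real.sin θ) = 0 := by
  have hr0 : r ≠ 0 := hr.ne'
  have e1 : r ^ (((n + 2 : ℕ) : ℤ) - 1) = r ^ 2 * r ^ ((n : ℤ) - 1) := by
    rw [← zpow_natCast r 2, ← zpow_add₀ hr0]; congr 1; push_cast; ring
  have e2 : r ^ (((n + 1 : ℕ) : ℤ) - 1) = r * r ^ ((n : ℤ) - 1) := by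
    rw [← zpow_one_add₀ hr0]; congr 1; push_cast; ring
  have h2 : Real.sin (((n + 2 : ℕ) : ℝ) * θ)
      = 2 * Real.cos θ * Real.sin (((n + 1 : ℕ) : ℝ) * θ) - Real.sin ((n : ℝ) * θ) := by
    have a1 : ((n + 2 : ℕ) : ℝ) * θ = ((n + 1 : ℕ) : ℝ) * θ + θ := by push_cast; ring
    have a2 : (n : ℝ) * θ = ((n + 1 : ℕ) : ℝ) * θ - θ := by push_cast; ring
    rw [a1, a2, Real.sin_add, Real.sin_sub]; ring
  rw [e1, e2, h2]
  field_simp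
  ring

theorem aux_B_rec (r θ : ℝ) (hs : Real.sin θ ≠ 0) (n : ℕ) :
    r ^ (n + 2) * Real.sin ((((n + 2 : ℕ) : ℝ) - 1) * θ) / Real.sin θ
      + -(2 * r * Real.cos θ) *
        (r ^ (n + 1) * Real.sin ((((n + 1 : ℕ) : ℝ) - 1) * θ) / Real.sin θ)
      + r ^ 2 * (r ^ n * Real.sin (((n : ℝ) - 1) * θ) / Real.sin θ) = 0 := by
  have h2 : Real.sin ((((n + 2 : ℕ) : ℝ) - 1) * θ)
      = 2 * Real.cos θ * Real.sin ((((n + 1 : ℕ) : ℝ) - 1) * θ)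
        - Real.sin (((n : ℝ) - 1) * θ) := by
    have a1 : (((n + 2 : ℕ) : ℝ) - 1) * θ = (((n + 1 : ℕ) : ℝ) - 1) * θ + θ := by
      push_cast; ring
    have a2 : ((n : ℝ) - 1) * θ = (((n + 1 : ℕ) : ℝ) - 1) * θ - θ := by push_cast; ring
    rw [a1, a2, Real.sin_add, Real.sin_sub]; ring
  rw [h2]
  field_simp
  ring

/-- The statement with abstract coefficient sequences `A`, `B`. -/
theorem aux_main (m : ℕ) (hm : 2 ≤ m) (a b : ℝ) (A B : ℕ → ℝ)
    (hA0 : A 0 = 0) (hA1 : A 1 = 1) (hB0 : B 0 = -1) (hB1 : B 1 = 0)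
    (hA : ∀ n, A (n + 2) + a * A (n + 1) + b * A n = 0)
    (hB : ∀ n, B (n + 2) + a * B (n + 1) + b * B n = 0)
    (f g : (γ : Fin m) → ({i : Fin m // i ≠ γ} → ℕ) → ℝ)
    (hff : ∀ α β : Fin m, ∀ t : Fin m → ℕ, t α = 0 → t β = 0 →
        f α (fun i => t i.1) = f β (fun i => t i.1))
    (hgg : ∀ α β : Fin m, ∀ t : Fin m → ℕ, t α = 1 → t β = 1 →
        g α (fun i => t i.1) = g β (fun i => t i.1))
    (hfg : ∀ α β : Fin m, ∀ t : Fin m → ℕ, t α = 0 → t β = 1 →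
        f α (fun i => t i.1) = g β (fun i => t i.1)) :
    (∃! x : (Fin m → ℕ) → ℝ,
        (∀ t : Fin m → ℕ,
            x (fun i => t i + 2) + a * x (fun i => t i + 1) + b * x t = 0) ∧
        (∀ γ : Fin m, ∀ t : Fin m → ℕ, t γ = 0 → x t = f γ (fun i => t i.1)) ∧
        (∀ γ : Fin m, ∀ t : Fin m → ℕ, t γ = 1 → x t = g γ (fun i => t i.1))) ∧
    (∀ x : (Fin m → ℕ) → ℝ,
        (∀ t : Fin m → ℕ,
            x (fun i => t i + 2) + a * x (fun i => t i + 1) + b * x t = 0) →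
        (∀ γ : Fin m, ∀ t : Fin m → ℕ, t γ = 0 → x t = f γ (fun i => t i.1)) →
        (∀ γ : Fin m, ∀ t : Fin m → ℕ, t γ = 1 → x t = g γ (fun i => t i.1)) →
        ∀ β : Fin m, ∀ t : Fin m → ℕ, (∀ i, t β ≤ t i) →
          x t = A (t β) * g β (fun i => t i.1 - t β + 1)
              - B (t β) * f β (fun i => t i.1 - t β)) := by
  have hform : ∀ x : (Fin m → ℕ) → ℝ,
        (∀ t : Fin m → ℕ,
            x (fun i => t i + 2) + a * x (fun i => t i + 1) + b * x t = 0) →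
        (∀ γ : Fin m, ∀ t : Fin m → ℕ, t γ = 0 → x t = f γ (fun i => t i.1)) →
        (∀ γ : Fin m, ∀ t : Fin m → ℕ, t γ = 1 → x t = g γ (fun i => t i.1)) →
        ∀ β : Fin m, ∀ t : Fin m → ℕ, (∀ i, t β ≤ t i) →
          x t = A (t β) * g β (fun i => t i.1 - t β + 1)
              - B (t β) * f β (fun i => t i.1 - t β) := by
    intro x hx h0 h1 β t ht
    have key : ∀ s : Fin m → ℕ, ∀ n : ℕ,
        x (fun i => s i + n) = A n * x (fun i => s i + 1) - B n * x s ∧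
        x (fun i => s i + (n + 1)) = A (n + 1) * x (fun i => s i + 1) - B (n + 1) * x s := by
      intro s n
      induction n with
      | zero =>
        refine ⟨?_, ?_⟩
        · rw [hA0, hB0]
          change x s = _
          ring
        · simp only [zero_add]
          rw [hA1, hB1]
          ring
      | succ k ih =>
        refine ⟨ih.2, ?_⟩
        have h := hx (fun i => s i + k)
        simp only [add_assoc] at h
        rw [ih.1, ih.2] at h
        change x (fun i => s i + (k + 2)) = A (k + 2) * _ - B (k + 2) * _
        linear_combination h - x (fun i => s i + 1) * hA k + x s * hB k
    have k := (key (fun i => t i - t β) (t β)).1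
    have e : (fun i => t i - t β + t β) = t := funext fun i => Nat.sub_add_cancel (ht i)
    simp only [e] at k
    rw [k, h1 β (fun i => t i - t β + 1) (by simp), h0 β (fun i => t i - t β) (by simp)]
  refine ⟨?_, hform⟩
  haveI : Nonempty (Fin m) := ⟨⟨0, by omega⟩⟩
  have hmin : ∀ t : Fin m → ℕ, ∃ β, ∀ i, t β ≤ t i := fun t => Finite.exists_min t
  choose μ hμ using hmin
  obtain ⟨x, hxdef⟩ : ∃ x : (Fin m → ℕ) → ℝ, ∀ t, x t =
      A (t (μ t)) * g (μ t) (fun i => t i.1 - t (μ t) + 1)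
              - B (t (μ t)) * f (μ t) (fun i => t i.1 - t (μ t)) := ⟨_, fun _ => rfl⟩
  have hx : ∀ β t, (∀ i, t β ≤ t i) → x t = A (t β) * g β (fun i => t i.1 - t β + 1)
              - B (t β) * f β (fun i => t i.1 - t β) := by
    intro β t ht
    have e : t (μ t) = t β := le_antisymm (hμ t β) (ht _)
    rw [hxdef, e, hgg (μ t) β (fun i => t i - t β + 1) (by simp [e]) (by simp),
      hff (μ t) β (fun i => t i - t β) (by simp [e]) (by simp)]
  refine ⟨x, ⟨?_, ?_, ?_⟩, ?_⟩
  · intro t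
    have h := hμ t
    rw [hx (μ t) t h, hx (μ t) (fun i => t i + 1) (fun i => by simpa using h i),
      hx (μ t) (fun i => t i + 2) (fun i => by simpa using h i)]
    simp only [Nat.add_sub_add_right]
    linear_combination g (μ t) (fun i => t i.1 - t (μ t) + 1) * hA (t (μ t))
      - f (μ t) (fun i => t i.1 - t (μ t)) * hB (t (μ t))
  · intro γ t h
    rw [hx γ t (fun i => by omega), h, hA0, hB0]
    simp
  · intro γ t h
    by_cases hz : ∃ β, t β = 0
    · obtain ⟨β, hβ⟩ := hz
      rw [hx β t (fun i => by omega), hβ, hA0, hB0, ← hfg β γ t hβ h]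
      simp
    · have hp : ∀ i, 1 ≤ t i := fun i => Nat.one_le_iff_ne_zero.2 fun hi => hz ⟨i, hi⟩
      rw [hx γ t (fun i => by rw [h]; exact hp i), h, hA1, hB1]
      simp only [Nat.sub_add_cancel (hp _)]
      ring
  · rintro y ⟨y1, y2, y3⟩
    funext t
    rw [hform y y1 y2 y3 (μ t) t (hμ t), hx (μ t) t (hμ t)]

/-- Theorem 2(iii) of the paper: second order diagonal recurrence
`x(t+2·𝟏) + a x(t+𝟏) + b x(t) = 0` whose characteristic polynomial
`λ² + aλ + b` has non-real conjugate roots `r(cos θ ± i sin θ)`, `r > 0`,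
`θ ∈ (0, 2π) ∖ {π}`.  Boundary data `f γ, g γ` are functions on `ℕ^{m-1}`,
encoded as functions on `{i : Fin m // i ≠ γ} → ℕ`; `μ(t) = t^β` is encoded as
`∀ i, t β ≤ t i`.  For `t^β = 0` the factor `r^{t^β-1}` is interpreted as the
integer power `r^{(t^β : ℤ) - 1}` and `sin((t^β−1)θ)` as
`sin(((t^β : ℝ) − 1)θ)`. -/
theorem stmt_16 (m : ℕ) (hm : 2 ≤ m) (a b r θ : ℝ) (hr : 0 < r)
    (hθ1 : 0 < θ) (hθ2 : θ < 2 * Real.pi) (hθ3 : θ ≠ Real.pi)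
    (ha : a = -(2 * r * Real.cos θ)) (hb : b = r ^ 2)
    (f g : (γ : Fin m) → ({i : Fin m // i ≠ γ} → ℕ) → ℝ)
    (hff : ∀ α β : Fin m, ∀ t : Fin m → ℕ, t α = 0 → t β = 0 →
        f α (fun i => t i.1) = f β (fun i => t i.1))
    (hgg : ∀ α β : Fin m, ∀ t : Fin m → ℕ, t α = 1 → t β = 1 →
        g α (fun i => t i.1) = g β (fun i => t i.1))
    (hfg : ∀ α β : Fin m, ∀ t : Fin m → ℕ, t α = 0 → t β = 1 →
        f α (fun i => t i.1) = g β (fun i => t i.1)) :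
    (∃! x : (Fin m → ℕ) → ℝ,
        (∀ t : Fin m → ℕ,
            x (fun i => t i + 2) + a * x (fun i => t i + 1) + b * x t = 0) ∧
        (∀ γ : Fin m, ∀ t : Fin m → ℕ, t γ = 0 → x t = f γ (fun i => t i.1)) ∧
        (∀ γ : Fin m, ∀ t : Fin m → ℕ, t γ = 1 → x t = g γ (fun i => t i.1))) ∧
    (∀ x : (Fin m → ℕ) → ℝ,
        (∀ t : Fin m → ℕ,
            x (fun i => t i + 2) + a * x (fun i => t i + 1) + b * x t = 0) →
        (∀ γ : Fin m, ∀ t : Fin m → ℕ, t γ = 0 → x t = f γ (fun i => t i.1)) →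
        (∀ γ : Fin m, ∀ t : Fin m → ℕ, t γ = 1 → x t = g γ (fun i => t i.1)) →
        ∀ β : Fin m, ∀ t : Fin m → ℕ, (∀ i, t β ≤ t i) →
          x t = (r ^ ((t β : ℤ) - 1) * Real.sin ((t β : ℝ) * θ) / Real.sin θ) *
                  g β (fun i => t i.1 - t β + 1)
              - (r ^ (t β) * Real.sin (((t β : ℝ) - 1) * θ) / Real.sin θ) *
                  f β (fun i => t i.1 - t β)) := by
  have hs : Real.sin θ ≠ 0 := by
    rcases lt_or_gt_of_ne hθ3 with h | h
    · exact (Real.sin_pos_of_pos_of_lt_pi hθ1 h).ne'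
    · have h1 : 0 < Real.sin (θ - Real.pi) :=
        Real.sin_pos_of_pos_of_lt_pi (by linarith) (by linarith)
      rw [Real.sin_sub_pi] at h1
      linarith
  subst ha hb
  exact aux_main m hm _ _
    (fun n : ℕ => r ^ ((n : ℤ) - 1) * Real.sin ((n : ℝ) * θ) / Real.sin θ)
    (fun n : ℕ => r ^ n * Real.sin (((n : ℝ) - 1) * θ) / Real.sin θ)
    (by simp) (by simp [hs]) (by simp [hs, neg_div]) (by simp)
    (aux_A_rec r θ hr hs) (aux_B_rec r θ hs) f g hff hgg hfg
end

section
/- Let n ≥ 1, A ∈ Mat_n(ℝ), and f₁, f₂ : ℕ → ℝⁿ with f₁(0) = f₂(0). Then there is a unique function x : ℕ² → ℝⁿ satisfying x(t¹+1, t²+1) = A·x(t¹,t²) for all (t¹,t²) ∈ ℕ², x(0,t²) = f₁(t²) for all t² ∈ ℕ, and x(t¹,0) = f₂(t¹) for all t¹ ∈ ℕ; it is given by x(t¹,t²) = A^{t¹} f₁(t²−t¹) if t¹ ≤ t², and x(t¹,t²) = A^{t²} f₂(t¹−t²) if t² ≤ t¹. -/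
/-- Bivariate example: the diagonal recurrence `x(t¹+1, t²+1) = A x(t¹,t²)`
with boundary data `f₁, f₂` has a unique solution, given explicitly. -/
theorem stmt_17 (n : ℕ) (hn : 1 ≤ n) (A : Matrix (Fin n) (Fin n) ℝ)
    (f1 f2 : ℕ → Fin n → ℝ) (h0 : f1 0 = f2 0) :
    (∃! x : ℕ → ℕ → Fin n → ℝ,
        (∀ t1 t2 : ℕ, x (t1 + 1) (t2 + 1) = A.mulVec (x t1 t2)) ∧
        (∀ t2 : ℕ, x 0 t2 = f1 t2) ∧
        (∀ t1 : ℕ, x t1 0 = f2 t1)) ∧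
    (∀ x : ℕ → ℕ → Fin n → ℝ,
        (∀ t1 t2 : ℕ, x (t1 + 1) (t2 + 1) = A.mulVec (x t1 t2)) →
        (∀ t2 : ℕ, x 0 t2 = f1 t2) →
        (∀ t1 : ℕ, x t1 0 = f2 t1) →
        (∀ t1 t2 : ℕ, t1 ≤ t2 → x t1 t2 = (A ^ t1).mulVec (f1 (t2 - t1))) ∧
        (∀ t1 t2 : ℕ, t2 ≤ t1 → x t1 t2 = (A ^ t2).mulVec (f2 (t1 - t2)))) := by
  have key : ∀ x : ℕ → ℕ → Fin n → ℝ,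
        (∀ t1 t2 : ℕ, x (t1 + 1) (t2 + 1) = A.mulVec (x t1 t2)) →
        (∀ t2 : ℕ, x 0 t2 = f1 t2) →
        (∀ t1 : ℕ, x t1 0 = f2 t1) →
        (∀ t1 t2 : ℕ, t1 ≤ t2 → x t1 t2 = (A ^ t1).mulVec (f1 (t2 - t1))) ∧
        (∀ t1 t2 : ℕ, t2 ≤ t1 → x t1 t2 = (A ^ t2).mulVec (f2 (t1 - t2))) := by
    intro x hx h1 h2
    constructor
    · intro t1
      induction t1 with
      | zero => intro t2 _; simp [h1]
      | succ k ih =>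
        intro t2 h
        obtain ⟨m, rfl⟩ : ∃ m, t2 = m + 1 := ⟨t2 - 1, by omega⟩
        rw [hx, ih m (by omega), Matrix.mulVec_mulVec, ← pow_succ', Nat.add_sub_add_right]
    · intro t1 t2
      induction t2 generalizing t1 with
      | zero => intro _; simp [h2]
      | succ k ih =>
        intro h
        obtain ⟨m, rfl⟩ : ∃ m, t1 = m + 1 := ⟨t1 - 1, by omega⟩
        rw [hx, ih m (by omega), Matrix.mulVec_mulVec, ← pow_succ', Nat.add_sub_add_right]
  refine ⟨⟨fun t1 t2 => if t1 ≤ t2 then (A ^ t1).mulVec (f1 (t2 - t1))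
      else (A ^ t2).mulVec (f2 (t1 - t2)), ⟨?_, ?_, ?_⟩, ?_⟩, key⟩
  · intro t1 t2
    by_cases h : t1 ≤ t2
    · simp [h, Matrix.mulVec_mulVec, ← pow_succ']
    · simp [h, Matrix.mulVec_mulVec, ← pow_succ']
  · intro t2
    simp
  · intro t1
    rcases t1 with _ | k
    · simp [h0]
    · simp
  · rintro y ⟨hy, h1, h2⟩
    obtain ⟨ha, hb⟩ := key y hy h1 h2
    funext t1 t2
    by_cases h : t1 ≤ t2
    · simp only [h, if_true]
      rw [ha t1 t2 h]
    · simp only [h, if_false]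
      rw [hb t1 t2 (by omega)]
end

section
/- Let n ≥ 1, A ∈ Mat_n(ℝ), and f₁, f₂, f₃ : ℕ² → ℝⁿ with f₁(0,t³) = f₂(0,t³), f₁(t²,0) = f₃(0,t²), and f₂(t¹,0) = f₃(t¹,0) for all t¹,t²,t³ ∈ ℕ. Then there is a unique function x : ℕ³ → ℝⁿ satisfying x(t¹+1, t²+1, t³+1) = A·x(t¹,t²,t³) for all (t¹,t²,t³) ∈ ℕ³, x(0,t²,t³) = f₁(t²,t³), x(t¹,0,t³) = f₂(t¹,t³), and x(t¹,t²,0) = f₃(t¹,t²); it is given by x(t¹,t²,t³) = A^{t¹} f₁(t²−t¹, t³−t¹) if t¹ = min{t¹,t²,t³}, x(t¹,t²,t³) = A^{t²} f₂(t¹−t², t³−t²) if t² = min{t¹,t²,t³}, and x(t¹,t²,t³) = A^{t³} f₃(t¹−t³, t²−t³) if t³ = min{t¹,t²,t³}. -/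
/-- The solution, by recursion along the diagonal. -/
def diagSol {n : ℕ} (A : Matrix (Fin n) (Fin n) ℝ) (f1 f2 f3 : ℕ → ℕ → Fin n → ℝ) :
    ℕ → ℕ → ℕ → Fin n → ℝ
  | 0, b, c => f1 b c
  | a + 1, 0, c => f2 (a + 1) c
  | a + 1, b + 1, 0 => f3 (a + 1) (b + 1)
  | a + 1, b + 1, c + 1 => A.mulVec (diagSol A f1 f2 f3 a b c)

lemma diag_shift {n : ℕ} (A : Matrix (Fin n) (Fin n) ℝ) (x : ℕ → ℕ → ℕ → Fin n → ℝ)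
    (hx : ∀ t1 t2 t3 : ℕ, x (t1 + 1) (t2 + 1) (t3 + 1) = A.mulVec (x t1 t2 t3))
    (a b c k : ℕ) : x (a + k) (b + k) (c + k) = (A ^ k).mulVec (x a b c) := by
  induction k with
  | zero => simp
  | succ k ih =>
    rw [← add_assoc, ← add_assoc, ← add_assoc, hx, ih, Matrix.mulVec_mulVec, pow_succ']

/-- Trivariate example: the diagonal recurrence
`x(t¹+1, t²+1, t³+1) = A x(t¹,t²,t³)` with boundary data `f₁, f₂, f₃` has a
unique solution, given explicitly. -/
theorem stmt_18 (n : ℕ) (hn : 1 ≤ n) (A : Matrix (Fin n) (Fin n) ℝ)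
    (f1 f2 f3 : ℕ → ℕ → Fin n → ℝ)
    (h12 : ∀ t3 : ℕ, f1 0 t3 = f2 0 t3)
    (h13 : ∀ t2 : ℕ, f1 t2 0 = f3 0 t2)
    (h23 : ∀ t1 : ℕ, f2 t1 0 = f3 t1 0) :
    (∃! x : ℕ → ℕ → ℕ → Fin n → ℝ,
        (∀ t1 t2 t3 : ℕ,
            x (t1 + 1) (t2 + 1) (t3 + 1) = A.mulVec (x t1 t2 t3)) ∧
        (∀ t2 t3 : ℕ, x 0 t2 t3 = f1 t2 t3) ∧
        (∀ t1 t3 : ℕ, x t1 0 t3 = f2 t1 t3) ∧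
        (∀ t1 t2 : ℕ, x t1 t2 0 = f3 t1 t2)) ∧
    (∀ x : ℕ → ℕ → ℕ → Fin n → ℝ,
        (∀ t1 t2 t3 : ℕ,
            x (t1 + 1) (t2 + 1) (t3 + 1) = A.mulVec (x t1 t2 t3)) →
        (∀ t2 t3 : ℕ, x 0 t2 t3 = f1 t2 t3) →
        (∀ t1 t3 : ℕ, x t1 0 t3 = f2 t1 t3) →
        (∀ t1 t2 : ℕ, x t1 t2 0 = f3 t1 t2) →
        (∀ t1 t2 t3 : ℕ, t1 ≤ t2 → t1 ≤ t3 →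
            x t1 t2 t3 = (A ^ t1).mulVec (f1 (t2 - t1) (t3 - t1))) ∧
        (∀ t1 t2 t3 : ℕ, t2 ≤ t1 → t2 ≤ t3 →
            x t1 t2 t3 = (A ^ t2).mulVec (f2 (t1 - t2) (t3 - t2))) ∧
        (∀ t1 t2 t3 : ℕ, t3 ≤ t1 → t3 ≤ t2 →
            x t1 t2 t3 = (A ^ t3).mulVec (f3 (t1 - t3) (t2 - t3)))) := by
  refine ⟨⟨diagSol A f1 f2 f3, ⟨?_, ?_, ?_, ?_⟩, ?_⟩, ?_⟩
  · intro a b c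
    simp [diagSol]
  · intro b c
    simp [diagSol]
  · intro a c
    cases a <;> simp [diagSol, h12]
  · intro a b
    cases a <;> cases b <;> simp [diagSol, h13, h23]
  · rintro y ⟨hy, y1, y2, y3⟩
    funext a
    induction a with
    | zero => funext b c; simp [diagSol, y1]
    | succ a ih =>
      funext b c
      cases b with
      | zero => simp [diagSol, y2]
      | succ b =>
        cases c with
        | zero => simp [diagSol, y3]
        | succ c => rw [hy, ih]; simp [diagSol]
  · intro x hx x1 x2 x3
    refine ⟨?_, ?_, ?_⟩
    · intro a b c h h'
      have := diag_shift A x hx 0 (b - a) (c - a) a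
      rwa [Nat.sub_add_cancel h, Nat.sub_add_cancel h', zero_add, x1] at this
    · intro a b c h h'
      have := diag_shift A x hx (a - b) 0 (c - b) b
      rwa [Nat.sub_add_cancel h, Nat.sub_add_cancel h', zero_add, x2] at this
    · intro a b c h h'
      have := diag_shift A x hx (a - c) (b - c) 0 c
      rwa [Nat.sub_add_cancel h, Nat.sub_add_cancel h', zero_add, x3] at this
end
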